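/- Let (A,φ) be a connection and Higgs field on ℝ³ solving the space-time monopole equation, let θ ∈ ℝ, and set ρ = e^{iθ}. Suppose k : ℝ³ → U(n) is a smooth unitary-valued map solving the μ-linear system for (A,φ) with μ = ρ, and E : ℝ³ → GL(n,ℂ) is a smooth map solving the μ-linear system for (A,φ) with μ = −ρ. Then g := k⁻¹E solves the Ward equation with parameter e^{iθ}: −∂_t((∂_tg)g⁻¹) + ∂_x((∂_xg)g⁻¹) + ∂_y((∂_yg)g⁻¹) + [(∂_tg)g⁻¹, cosθ·(∂_xg)g⁻¹ + sinθ·(∂_yg)g⁻¹] = 0. -/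

import Mathlib

open Matrix Complex
open scoped Matrix ComplexConjugate

attribute [local instance] Matrix.normedAddCommGroup Matrix.normedSpace

noncomputable section

/-- `n × n` complex matrices. -/
abbrev Mat (n : ℕ) := Matrix (Fin n) (Fin n) ℂ

/-- Space-time `ℝ³` with coordinates `(x, y, t)`. -/
abbrev P3 : Type := ℝ × ℝ × ℝ

section PartialDerivatives

variable {W : Type*} [NormedAddCommGroup W] [NormedSpace ℝ W]

/-- Partial derivative in `x`. -/
def pdx (f : P3 → W) (p : P3) : W := deriv (fun s => f (s, p.2.1, p.2.2)) p.1

/-- Partial derivative in `y`. -/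
def pdy (f : P3 → W) (p : P3) : W := deriv (fun s => f (p.1, s, p.2.2)) p.2.1

/-- Partial derivative in `t`. -/
def pdt (f : P3 → W) (p : P3) : W := deriv (fun s => f (p.1, p.2.1, s)) p.2.2

/-- Light-cone derivative `∂_ξ = ∂_t + ∂_x`. -/
def pdxi (f : P3 → W) (p : P3) : W := pdt f p + pdx f p

/-- Light-cone derivative `∂_η = ∂_t − ∂_x`. -/
def pdeta (f : P3 → W) (p : P3) : W := pdt f p - pdx f p

end PartialDerivatives

/-- `∂_z = ½(∂_x − i ∂_y)`. -/
def pdz {n : ℕ} (f : P3 → Mat n) (p : P3) : Mat n :=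
  (2⁻¹ : ℂ) • (pdx f p - Complex.I • pdy f p)

/-- `∂_z̄ = ½(∂_x + i ∂_y)`. -/
def pdzbar {n : ℕ} (f : P3 → Mat n) (p : P3) : Mat n :=
  (2⁻¹ : ℂ) • (pdx f p + Complex.I • pdy f p)

/-- Commutator `[X, Y] = XY − YX`. -/
def brk {n : ℕ} (X Y : Mat n) : Mat n := X * Y - Y * X

/-- Anti-Hermitian-valued map. -/
def SkewHerm {n : ℕ} (f : P3 → Mat n) : Prop := ∀ p : P3, (f p)ᴴ = -(f p)

/-- The space-time monopole equation `F_{xy} = −∇_tφ`, `F_{xt} = −∇_yφ`, `F_{yt} = ∇_xφ`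
for the connection `(Ax, Ay, At)` and Higgs field `Ph`, at the point `p`. -/
def MonopoleEqAt {n : ℕ} (Ax Ay At Ph : P3 → Mat n) (p : P3) : Prop :=
  (-(pdx Ay p) + pdy Ax p + brk (Ax p) (Ay p) = -(pdt Ph p - brk (At p) (Ph p))) ∧
  (-(pdx At p) + pdt Ax p + brk (Ax p) (At p) = -(pdy Ph p - brk (Ay p) (Ph p))) ∧
  (-(pdy At p) + pdt Ay p + brk (Ay p) (At p) = pdx Ph p - brk (Ax p) (Ph p))

/-- The space-time monopole equation on all of `ℝ³`. -/
def MonopoleEq {n : ℕ} (Ax Ay At Ph : P3 → Mat n) : Prop :=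
  ∀ p : P3, MonopoleEqAt Ax Ay At Ph p

/-- `E` solves the `μ`-linear system for `(A, φ)`. -/
def SolvesMu {n : ℕ} (Ax Ay At Ph : P3 → Mat n) (μ : ℂ) (E : P3 → Mat n) : Prop :=
  ∀ p : P3,
    (2⁻¹ : ℂ) • pdt E p + μ • pdz E p =
      ((2⁻¹ : ℂ) • (At p + Complex.I • Ph p) +
        μ • ((2⁻¹ : ℂ) • (Ax p - Complex.I • Ay p))) * E p ∧
    (2⁻¹ : ℂ) • pdt E p + μ⁻¹ • pdzbar E p =
      ((2⁻¹ : ℂ) • (At p - Complex.I • Ph p) +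
        μ⁻¹ • ((2⁻¹ : ℂ) • (Ax p + Complex.I • Ay p))) * E p

/-- `F` solves the `λ`-linear system for `(A, φ)`. -/
def SolvesLam {n : ℕ} (Ax Ay At Ph : P3 → Mat n) (lm : ℂ) (F : P3 → Mat n) : Prop :=
  ∀ p : P3,
    lm • pdxi F p - pdy F p = (lm • (At p + Ax p) - (Ay p + Ph p)) * F p ∧
    lm⁻¹ • pdeta F p - pdy F p = (lm⁻¹ • (At p - Ax p) - (Ay p - Ph p)) * F p

/-- The left-hand side of the Ward equation with parameter `e^{iθ}`, evaluated at `p`: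
`−∂_t((∂_tg)g⁻¹) + ∂_x((∂_xg)g⁻¹) + ∂_y((∂_yg)g⁻¹)
  + [(∂_tg)g⁻¹, cosθ·(∂_xg)g⁻¹ + sinθ·(∂_yg)g⁻¹]`. -/
def WardOpAt {n : ℕ} (θ : ℝ) (g : P3 → Mat n) (p : P3) : Mat n :=
  -(pdt (fun q => pdt g q * (g q)⁻¹) p) + pdx (fun q => pdx g q * (g q)⁻¹) p +
    pdy (fun q => pdy g q * (g q)⁻¹) p +
    brk (pdt g p * (g p)⁻¹)
      ((Real.cos θ : ℂ) • (pdx g p * (g p)⁻¹) + (Real.sin θ : ℂ) • (pdy g p * (g p)⁻¹))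

/-- Directional derivative. -/
def DD {n : ℕ} (v : P3) (f : P3 → Mat n) (p : P3) : Mat n := fderiv ℝ f p v

abbrev Sm {n : ℕ} (f : P3 → Mat n) : Prop := ContDiff ℝ (⊤ : ℕ∞) f

lemma Sm.dat {n : ℕ} {f : P3 → Mat n} (hf : Sm f) (p : P3) : DifferentiableAt ℝ f p :=
  (hf.differentiable (by simp)) p

lemma pdx_eq {n : ℕ} {f : P3 → Mat n} (hf : Sm f) (p : P3) : pdx f p = DD (1,0,0) f p := by
  have h := (hf.dat p).hasFDerivAt
  have h2 : HasDerivAt (fun s : ℝ => ((s, p.2.1, p.2.2) : P3)) (1,0,0) p.1 :=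
    (hasDerivAt_id p.1).prodMk ((hasDerivAt_const _ _).prodMk (hasDerivAt_const _ _))
  exact (h.comp_hasDerivAt (f := fun s : ℝ => ((s, p.2.1, p.2.2) : P3)) p.1 h2).deriv

lemma pdy_eq {n : ℕ} {f : P3 → Mat n} (hf : Sm f) (p : P3) : pdy f p = DD (0,1,0) f p := by
  have h := (hf.dat p).hasFDerivAt
  have h2 : HasDerivAt (fun s : ℝ => ((p.1, s, p.2.2) : P3)) (0,1,0) p.2.1 :=
    (hasDerivAt_const _ _).prodMk ((hasDerivAt_id p.2.1).prodMk (hasDerivAt_const _ _))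
  exact (h.comp_hasDerivAt (f := fun s : ℝ => ((p.1, s, p.2.2) : P3)) p.2.1 h2).deriv

lemma pdt_eq {n : ℕ} {f : P3 → Mat n} (hf : Sm f) (p : P3) : pdt f p = DD (0,0,1) f p := by
  have h := (hf.dat p).hasFDerivAt
  have h2 : HasDerivAt (fun s : ℝ => ((p.1, p.2.1, s) : P3)) (0,0,1) p.2.2 :=
    (hasDerivAt_const _ _).prodMk ((hasDerivAt_const _ _).prodMk (hasDerivAt_id p.2.2))
  exact (h.comp_hasDerivAt (f := fun s : ℝ => ((p.1, p.2.1, s) : P3)) p.2.2 h2).deriv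

/-- Multiplication as a continuous bilinear map. -/
def mulB (n : ℕ) : Mat n →L[ℝ] Mat n →L[ℝ] Mat n :=
  LinearMap.toContinuousLinearMap
    ((LinearMap.toContinuousLinearMap (𝕜 := ℝ) (E := Mat n) (F' := Mat n)).toLinearMap ∘ₗ
      LinearMap.mul ℝ (Mat n))

lemma mulB_apply {n : ℕ} (X Y : Mat n) : mulB n X Y = X * Y := rfl

lemma Sm.mul {n : ℕ} {f g : P3 → Mat n} (hf : Sm f) (hg : Sm g) : Sm (fun q => f q * g q) :=
  (mulB n).isBoundedBilinearMap.contDiff.comp (hf.prodMk hg)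

lemma DD_mul {n : ℕ} {f g : P3 → Mat n} (hf : Sm f) (hg : Sm g) (v p : P3) :
    DD v (fun q => f q * g q) p = DD v f p * g p + f p * DD v g p := by
  have h := (mulB n).hasFDerivAt_of_bilinear (hf.dat p).hasFDerivAt (hg.dat p).hasFDerivAt
  have h2 : DD v (fun q => f q * g q) p = _ := congrArg (fun L => L v) h.fderiv
  rw [h2, add_comm]
  rfl

lemma Sm.DD {n : ℕ} {f : P3 → Mat n} (hf : Sm f) (v : P3) : Sm (DD v f) :=
  (hf.fderiv_right (m := (⊤ : ℕ∞)) (by simp)).clm_apply contDiff_const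

lemma DD_comm {n : ℕ} {f : P3 → Mat n} (hf : Sm f) (v w p : P3) :
    DD v (DD w f) p = DD w (DD v f) p := by
  have key : ∀ v w, DD v (DD w f) p = fderiv ℝ (fderiv ℝ f) p v w := by
    intro v w
    have hd : DifferentiableAt ℝ (fderiv ℝ f) p :=
      (hf.fderiv_right (m := (⊤ : ℕ∞)) (by simp)).differentiable (by simp) p
    have := (hd.hasFDerivAt.clm_apply (hasFDerivAt_const w p)).fderiv
    have h2 : DD v (DD w f) p = _ := congrArg (fun L => L v) this
    rw [h2]
    show fderiv ℝ f p 0 + _ = _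
    rw [map_zero, zero_add]; rfl
  rw [key, key]
  exact ((hf.contDiffAt (x := p)).isSymmSndFDerivAt (by simpa using WithTop.coe_le_coe.2 (le_top : (2:ℕ∞) ≤ ⊤))) v w

lemma DD_add {n : ℕ} {f g : P3 → Mat n} (hf : Sm f) (hg : Sm g) (v p : P3) :
    DD v (fun q => f q + g q) p = DD v f p + DD v g p := by
  exact congrArg (fun L => L v) (fderiv_add (hf.dat p) (hg.dat p))

lemma DD_sub {n : ℕ} {f g : P3 → Mat n} (hf : Sm f) (hg : Sm g) (v p : P3) :
    DD v (fun q => f q - g q) p = DD v f p - DD v g p := by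
  exact congrArg (fun L => L v) (fderiv_sub (hf.dat p) (hg.dat p))

lemma DD_smul {n : ℕ} {f : P3 → Mat n} (hf : Sm f) (c : ℝ) (v p : P3) :
    DD v (fun q => c • f q) p = c • DD v f p := by
  exact congrArg (fun L => L v) (fderiv_const_smul (hf.dat p) c)

lemma DD_vadd {n : ℕ} (f : P3 → Mat n) (v w p : P3) :
    DD (v + w) f p = DD v f p + DD w f p := map_add _ _ _

lemma DD_vec {n : ℕ} (f : P3 → Mat n) (a b : ℝ) (p : P3) :
    DD (a, b, 0) f p = a • DD (1,0,0) f p + b • DD (0,1,0) f p := by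
  have : ((a, b, 0) : P3) = a • (1,0,0) + b • (0,1,0) := by ext <;> simp
  rw [this, DD_vadd]
  simp only [DD, map_smul]

lemma sm_det {n : ℕ} {f : P3 → Mat n} (hf : ∀ i j, ContDiff ℝ (⊤ : ℕ∞) (fun q => f q i j)) :
    ContDiff ℝ (⊤ : ℕ∞) (fun q => (f q).det) := by
  simp only [Matrix.det_apply]
  refine ContDiff.sum fun σ _ => ?_
  exact (contDiff_prod fun i _ => hf _ _).const_smul _

lemma Sm.ent {n : ℕ} {f : P3 → Mat n} (hf : Sm f) (i j : Fin n) :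
    ContDiff ℝ (⊤ : ℕ∞) (fun q => f q i j) :=
  contDiff_pi.1 (contDiff_pi.1 hf i) j

lemma Sm.inv {n : ℕ} {f : P3 → Mat n} (hf : Sm f) (hu : ∀ p, IsUnit (f p)) :
    Sm (fun q => (f q)⁻¹) := by
  refine contDiff_pi.2 fun i => contDiff_pi.2 fun j => ?_
  have : (fun q => (f q)⁻¹ i j) = fun q => ((f q).det)⁻¹ * (f q).adjugate i j := by
    funext q
    rw [Matrix.inv_def, Ring.inverse_eq_inv']; rfl
  rw [this]
  refine ContDiff.mul ((sm_det hf.ent).inv fun q => ?_) ?_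
  · exact ((Matrix.isUnit_iff_isUnit_det _).1 (hu q)).ne_zero
  · simp only [Matrix.adjugate_apply]
    refine sm_det fun a b => ?_
    by_cases h : a = j
    · subst h; simp; exact contDiff_const
    · simp [Matrix.updateRow_ne h]; exact hf.ent a b

lemma DD_inv {n : ℕ} {f : P3 → Mat n} (hf : Sm f) (hu : ∀ p, IsUnit (f p)) (v p : P3) :
    DD v (fun q => (f q)⁻¹) p = - ((f p)⁻¹ * DD v f p * (f p)⁻¹) := by
  have hd : ∀ q, IsUnit (f q).det := fun q => (Matrix.isUnit_iff_isUnit_det _).1 (hu q)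
  have h1 := DD_mul (hf.inv hu) hf v p
  have h0 : (fun q => (f q)⁻¹ * f q) = fun _ => 1 := by
    funext q; exact Matrix.nonsing_inv_mul _ (hd q)
  have h2 : DD v (fun q => (f q)⁻¹ * f q) p = 0 := by
    rw [h0]; simp [DD]
  rw [h2] at h1
  have h3 := congrArg (· * (f p)⁻¹) h1
  simp only [add_mul, zero_mul, mul_assoc, Matrix.mul_nonsing_inv _ (hd p), mul_one] at h3
  rw [mul_assoc]
  exact eq_neg_of_add_eq_zero_left h3.symm

/-- Core noncommutative computation. -/
lemma ward_core {n : ℕ} (T U V : P3) (At Au Av Ph k E : P3 → Mat n)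
    (hAt : Sm At) (hAu : Sm Au) (hPh : Sm Ph) (hks : Sm k) (hEs : Sm E)
    (hku : ∀ p, IsUnit (k p)) (hEu : ∀ p, IsUnit (E p))
    (hm : ∀ p, -(DD U At p) + DD T Au p + (Au p * At p - At p * Au p) =
      DD V Ph p - (Av p * Ph p - Ph p * Av p))
    (hk1 : ∀ p, DD T k p + DD U k p = (At p + Au p) * k p)
    (hk2 : ∀ p, DD V k p = (Av p + Ph p) * k p)
    (hE1 : ∀ p, DD T E p - DD U E p = (At p - Au p) * E p)
    (hE2 : ∀ p, DD V E p = (Av p - Ph p) * E p)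
    (g : P3 → Mat n) (hg : g = fun q => (k q)⁻¹ * E q) (p : P3) :
    -(DD T (fun q => DD T g q * (g q)⁻¹) p) + DD U (fun q => DD U g q * (g q)⁻¹) p
      + DD V (fun q => DD V g q * (g q)⁻¹) p
      + (DD T g p * (g p)⁻¹ * (DD U g p * (g p)⁻¹) -
        DD U g p * (g p)⁻¹ * (DD T g p * (g p)⁻¹)) = 0 := by
  have hkd : ∀ q, IsUnit (k q).det := fun q => (Matrix.isUnit_iff_isUnit_det _).1 (hku q)
  have hEd : ∀ q, IsUnit (E q).det := fun q => (Matrix.isUnit_iff_isUnit_det _).1 (hEu q)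
  have hK := hks.inv hku
  have hgs : Sm g := by rw [hg]; exact hK.mul hEs
  have hgu : ∀ q, IsUnit (g q) := fun q => by
    rw [hg]; exact ((Matrix.isUnit_nonsing_inv_iff).2 (hku q)).mul (hEu q)
  have hgi := hgs.inv hgu
  have hJ : ∀ v q, DD v g q * (g q)⁻¹ =
      (k q)⁻¹ * DD v E q * (E q)⁻¹ * k q - (k q)⁻¹ * DD v k q := by
    intro v q
    have e1 : DD v g q = DD v (fun q => (k q)⁻¹) q * E q + (k q)⁻¹ * DD v E q := by rw [hg]; exact DD_mul hK hEs v q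
    have e2 : (g q)⁻¹ = (E q)⁻¹ * k q := by
      rw [hg]; simp only [Matrix.mul_inv_rev, Matrix.nonsing_inv_nonsing_inv _ (hkd q)]
    rw [e1, e2, DD_inv hks hku]
    have a1 : E q * ((E q)⁻¹ * k q) = k q := by
      rw [← mul_assoc, Matrix.mul_nonsing_inv _ (hEd q), one_mul]
    have a2 : (k q)⁻¹ * k q = 1 := Matrix.nonsing_inv_mul _ (hkd q)
    simp only [add_mul, neg_mul, mul_assoc, a1, a2, mul_one]
    abel
  -- J_t - J_u and J_v
  have hP : ∀ q, DD T g q * (g q)⁻¹ - DD U g q * (g q)⁻¹ =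
      (2:ℝ) • ((k q)⁻¹ * At q * k q - (k q)⁻¹ * DD T k q) := by
    intro q
    rw [hJ, hJ]
    have b1 : DD T E q = (At q - Au q) * E q + DD U E q := by rw [← hE1]; abel
    have b2 : DD U k q = (At q + Au q) * k q - DD T k q := by rw [← hk1]; abel
    have a1 : E q * ((E q)⁻¹ * k q) = k q := by
      rw [← mul_assoc, Matrix.mul_nonsing_inv _ (hEd q), one_mul]
    rw [b1, b2, two_smul]
    simp only [add_mul, sub_mul, mul_add, mul_sub, mul_assoc, a1]
    abel
  have hQ : ∀ q, DD V g q * (g q)⁻¹ = (-2:ℝ) • ((k q)⁻¹ * Ph q * k q) := by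
    intro q
    have a1 : E q * ((E q)⁻¹ * k q) = k q := by
      rw [← mul_assoc, Matrix.mul_nonsing_inv _ (hEd q), one_mul]
    rw [hJ, hk2, hE2, neg_smul, two_smul]
    simp only [add_mul, sub_mul, mul_add, mul_sub, mul_assoc, a1]
    abel
  have sJ : ∀ v, Sm (fun q => DD v g q * (g q)⁻¹) := fun v => (hgs.DD v).mul hgi
  have dJ : ∀ v w, DD v (fun q => DD w g q * (g q)⁻¹) p =
      DD v (DD w g) p * (g p)⁻¹ - DD w g p * (g p)⁻¹ * (DD v g p * (g p)⁻¹) := by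
    intro v w
    rw [DD_mul (hgs.DD w) hgi, DD_inv hgs hgu]
    simp only [mul_neg, mul_assoc, sub_eq_add_neg]
  have sP : Sm (fun q => (k q)⁻¹ * At q * k q - (k q)⁻¹ * DD T k q) :=
    ((hK.mul hAt).mul hks).sub (hK.mul (hks.DD T))
  have sQ : Sm (fun q => (k q)⁻¹ * Ph q * k q) := (hK.mul hPh).mul hks
  have c1 : DD (T+U) (fun q => DD T g q * (g q)⁻¹ - DD U g q * (g q)⁻¹) p =
      DD T (fun q => DD T g q * (g q)⁻¹) p - DD U (fun q => DD U g q * (g q)⁻¹) p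
      - (DD T g p * (g p)⁻¹ * (DD U g p * (g p)⁻¹) -
        DD U g p * (g p)⁻¹ * (DD T g p * (g p)⁻¹)) := by
    rw [DD_sub (sJ T) (sJ U), DD_vadd, DD_vadd, dJ U T, dJ T U, DD_comm hgs U T]
    abel
  have c2 : DD (T+U) (fun q => (k q)⁻¹ * At q * k q - (k q)⁻¹ * DD T k q) p =
      (k p)⁻¹ * (DD U At p - DD T Au p - (Au p * At p - At p * Au p)) * k p := by
    have d0 : ∀ q, DD (T+U) k q = (At q + Au q) * k q := fun q => by rw [DD_vadd, hk1]
    have d1 : DD (T+U) (DD T k) p =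
        (DD T At p + DD T Au p) * k p + (At p + Au p) * DD T k p := by
      rw [DD_comm hks, show DD (T+U) k = fun q => (At q + Au q) * k q from funext d0,
        DD_mul (hAt.add hAu) hks, DD_add hAt hAu]
    have a2 : k p * (k p)⁻¹ = 1 := Matrix.mul_nonsing_inv _ (hkd p)
    have d2 : DD (T+U) (fun q => (k q)⁻¹) p = -((k p)⁻¹ * (At p + Au p)) := by
      rw [DD_inv hks hku, d0]; simp only [mul_assoc, a2, mul_one]
    rw [DD_sub ((hK.mul hAt).mul hks) (hK.mul (hks.DD T)), DD_mul (hK.mul hAt) hks,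
      DD_mul hK hAt, DD_mul hK (hks.DD T), d1, d2, d0, DD_vadd]
    simp only [add_mul, sub_mul, mul_add, mul_sub, mul_assoc, neg_mul]
    noncomm_ring
  have c3 : DD V (fun q => (k q)⁻¹ * Ph q * k q) p =
      (k p)⁻¹ * (DD V Ph p - (Av p * Ph p - Ph p * Av p)) * k p := by
    have a2 : k p * (k p)⁻¹ = 1 := Matrix.mul_nonsing_inv _ (hkd p)
    have d2 : DD V (fun q => (k q)⁻¹) p = -((k p)⁻¹ * (Av p + Ph p)) := by
      rw [DD_inv hks hku, hk2]; simp only [mul_assoc, a2, mul_one]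
    rw [DD_mul (hK.mul hPh) hks, DD_mul hK hPh, d2, hk2]
    noncomm_ring
  rw [show (fun q => DD T g q * (g q)⁻¹ - DD U g q * (g q)⁻¹) = _ from funext hP,
    DD_smul sP, c2] at c1
  rw [show (fun q => DD V g q * (g q)⁻¹) = _ from funext hQ, DD_smul sQ, c3, ← hm p]
  have : ∀ a b c d : Mat n, -a + b + c + d = -(a - b - d) + c := by intros; abel
  rw [this, ← c1, neg_smul, ← neg_add, ← smul_add, ← add_mul, ← mul_add]
  have : DD U At p - DD T Au p - (Au p * At p - At p * Au p) +
    (-DD U At p + DD T Au p + (Au p * At p - At p * Au p)) = 0 := by abel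
  rw [this]; simp

/-- Algebraic unpacking of the linear system. -/
lemma mu_unpack {n : ℕ} (c s : ℝ) (Dt Dx Dy E At Ax Ay Ph : Mat n) (m : ℂ) (hcs : c^2+s^2=1)
    (hm : m = c + s * I)
    (h1 : (2⁻¹ : ℂ) • Dt + m • ((2⁻¹ : ℂ) • (Dx - I • Dy)) =
      ((2⁻¹ : ℂ) • (At + I • Ph) + m • ((2⁻¹ : ℂ) • (Ax - I • Ay))) * E)
    (h2 : (2⁻¹ : ℂ) • Dt + m⁻¹ • ((2⁻¹ : ℂ) • (Dx + I • Dy)) =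
      ((2⁻¹ : ℂ) • (At - I • Ph) + m⁻¹ • ((2⁻¹ : ℂ) • (Ax + I • Ay))) * E) :
    Dt + (c • Dx + s • Dy) = (At + (c • Ax + s • Ay)) * E ∧
    s • Dx + (-c) • Dy = (s • Ax + (-c) • Ay + Ph) * E := by
  have hcs' : (c:ℂ)^2 + (s:ℂ)^2 = 1 := by exact_mod_cast hcs
  have hmi : m⁻¹ = c - s * I := by
    apply inv_eq_of_mul_eq_one_right
    rw [hm]; linear_combination hcs' - (s:ℂ)^2 * I_sq
  rw [hmi] at h2
  rw [hm] at h1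
  simp only [add_mul, sub_mul, smul_mul_assoc] at h1 h2 ⊢
  constructor
  · ext i j
    have e1 := congrFun (congrFun h1 i) j
    have e2 := congrFun (congrFun h2 i) j
    simp only [Matrix.add_apply, Matrix.sub_apply, Matrix.smul_apply, smul_eq_mul,
      Complex.real_smul] at e1 e2 ⊢
    linear_combination e1 + e2 + s * (Dy i j - (Ay * E) i j) * I_sq
  · ext i j
    have e1 := congrFun (congrFun h1 i) j
    have e2 := congrFun (congrFun h2 i) j
    simp only [Matrix.add_apply, Matrix.sub_apply, Matrix.smul_apply, smul_eq_mul,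
      Complex.real_smul, Complex.ofReal_neg] at e1 e2 ⊢
    linear_combination (-I) * (e1 - e2) + (s * Dx i j - c * Dy i j - s * (Ax * E) i j
      + c * (Ay * E) i j - (Ph * E) i j) * I_sq

/-- If `(A,φ)` solves the space-time monopole equation, `k` is a smooth
unitary solution of the `μ`-linear system at `μ = e^{iθ}` and `E` is a smooth `GL(n,ℂ)`-valued
solution at `μ = −e^{iθ}`, then `g = k⁻¹E` solves the Ward equation with parameter `e^{iθ}`. -/
theorem ward_equation_from_monopole {n : ℕ} (θ : ℝ) (Ax Ay At Ph : P3 → Mat n)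
    (hxs : ContDiff ℝ (⊤ : ℕ∞) Ax) (hys : ContDiff ℝ (⊤ : ℕ∞) Ay)
    (hts : ContDiff ℝ (⊤ : ℕ∞) At) (hps : ContDiff ℝ (⊤ : ℕ∞) Ph)
    (hxa : SkewHerm Ax) (hya : SkewHerm Ay) (hta : SkewHerm At) (hpa : SkewHerm Ph)
    (hmono : MonopoleEq Ax Ay At Ph)
    (k : P3 → Mat n) (hks : ContDiff ℝ (⊤ : ℕ∞) k)
    (hku : ∀ p : P3, k p ∈ Matrix.unitaryGroup (Fin n) ℂ)
    (hk : SolvesMu Ax Ay At Ph (Complex.exp (θ * Complex.I)) k)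
    (E : P3 → Mat n) (hEs : ContDiff ℝ (⊤ : ℕ∞) E) (hEgl : ∀ p : P3, IsUnit (E p))
    (hE : SolvesMu Ax Ay At Ph (-Complex.exp (θ * Complex.I)) E) :
    ∀ p : P3, WardOpAt θ (fun q => (k q)⁻¹ * E q) p = 0 := by
  intro p
  set c := Real.cos θ with hc
  set s := Real.sin θ with hs
  have hcs : c^2 + s^2 = 1 := Real.cos_sq_add_sin_sq θ
  have hexp : Complex.exp (θ * Complex.I) = c + s * I := by
    rw [Complex.exp_mul_I, hc, hs]; simp
  have hkU : ∀ q, IsUnit (k q) := fun q =>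
    (Matrix.isUnit_iff_isUnit_det _).2 (Matrix.UnitaryGroup.det_isUnit ⟨k q, hku q⟩)
  have hgs : Sm (fun q => (k q)⁻¹ * E q) := Sm.mul (Sm.inv hks hkU) hEs
  have hgu : ∀ q, IsUnit ((k q)⁻¹ * E q) := fun q =>
    ((Matrix.isUnit_nonsing_inv_iff).2 (hkU q)).mul (hEgl q)
  have hgi := hgs.inv hgu
  have hku1 := fun q => mu_unpack c s _ _ _ _ _ _ _ _ _ hcs hexp (hk q).1 (hk q).2
  have hEu1 := fun q => mu_unpack (-c) (-s) _ _ _ _ _ _ _ _ (-Complex.exp (θ * Complex.I))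
    (by rw [neg_sq, neg_sq]; exact hcs) (by rw [hexp]; push_cast; ring) (hE q).1 (hE q).2
  simp only [pdx_eq hks, pdy_eq hks, pdt_eq hks] at hku1
  simp only [pdx_eq hEs, pdy_eq hEs, pdt_eq hEs] at hEu1
  have sAu : Sm (fun q => c • Ax q + s • Ay q) := (hxs.const_smul c).add (hys.const_smul s)
  have core := ward_core (0,0,1) (c,s,0) (s,-c,0) At (fun q => c • Ax q + s • Ay q)
    (fun q => s • Ax q + (-c) • Ay q) Ph k E hts sAu hps hks hEs hkU hEgl
    (by
      intro q
      obtain ⟨-, m2, m3⟩ := hmono q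
      rw [pdx_eq hts, pdt_eq hxs, pdy_eq hps] at m2
      rw [pdy_eq hts, pdt_eq hys, pdx_eq hps] at m3
      rw [DD_add (hxs.const_smul c) (hys.const_smul s), DD_smul hxs, DD_smul hys, DD_vec _ c s, DD_vec _ s (-c)]
      have e2 := congrArg (fun M => c • M) m2
      have e3 := congrArg (fun M => s • M) m3
      simp only [brk] at e2 e3
      simp only [add_mul, mul_add, smul_mul_assoc, mul_smul_comm]
      linear_combination (norm := module) e2 + e3)
    (by intro q; rw [DD_vec]; exact (hku1 q).1)
    (by intro q; rw [DD_vec]; exact (hku1 q).2)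
    (by
      intro q; rw [DD_vec]
      have := (hEu1 q).1
      simp only [neg_smul] at this
      rw [sub_eq_add_neg, sub_eq_add_neg, neg_add, neg_add]; exact this)
    (by
      intro q; rw [DD_vec]
      have := congrArg (fun M => -M) (hEu1 q).2
      simp only [neg_smul, neg_neg, neg_add, ← neg_mul] at this ⊢
      rw [sub_eq_add_neg]; exact this)
    _ rfl p
  have sJ : ∀ v, Sm (fun q => DD v (fun q => (k q)⁻¹ * E q) q * ((k q)⁻¹ * E q)⁻¹) :=
    fun v => (hgs.DD v).mul hgi
  unfold WardOpAt brk
  simp only [pdx_eq hgs, pdy_eq hgs, pdt_eq hgs]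
  rw [pdx_eq (sJ _), pdy_eq (sJ _), pdt_eq (sJ _)]
  set g := (fun q => (k q)⁻¹ * E q) with hg
  have w1 : ∀ a b q, DD (a,b,0) g q * ((k q)⁻¹ * E q)⁻¹ =
      a • (DD (1,0,0) g q * ((k q)⁻¹ * E q)⁻¹) + b • (DD (0,1,0) g q * ((k q)⁻¹ * E q)⁻¹) := by
    intro a b q; rw [DD_vec, add_mul, smul_mul_assoc, smul_mul_assoc]
  have w2 : ∀ a b v, DD v (fun q => DD (a,b,0) g q * ((k q)⁻¹ * E q)⁻¹) p =
      a • DD v (fun q => DD (1,0,0) g q * ((k q)⁻¹ * E q)⁻¹) p +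
      b • DD v (fun q => DD (0,1,0) g q * ((k q)⁻¹ * E q)⁻¹) p := by
    intro a b v
    simp only [w1 a b]
    rw [DD_add ((sJ _).const_smul a) ((sJ _).const_smul b), DD_smul (sJ _), DD_smul (sJ _)]
  change _ + DD (c,s,0) (fun q => DD (c,s,0) g q * ((k q)⁻¹ * E q)⁻¹) p +
    DD (s,-c,0) (fun q => DD (s,-c,0) g q * ((k q)⁻¹ * E q)⁻¹) p +
    (_ * (DD (c,s,0) g p * ((k p)⁻¹ * E p)⁻¹) - (DD (c,s,0) g p * ((k p)⁻¹ * E p)⁻¹) * _) = 0 at core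
  rw [w2 c s, w2 s (-c), w1 c s] at core
  simp only [DD_vec _ c s, DD_vec _ s (-c)] at core
  rw [← core]
  simp only [Complex.coe_smul]
  congr 1
  rw [add_assoc, add_assoc]
  congr 1
  generalize DD (1,0,0) (fun q => DD (1,0,0) g q * ((k q)⁻¹ * E q)⁻¹) p = X
  generalize DD (0,1,0) (fun q => DD (0,1,0) g q * ((k q)⁻¹ * E q)⁻¹) p = Y
  generalize DD (1,0,0) (fun q => DD (0,1,0) g q * ((k q)⁻¹ * E q)⁻¹) p = Z
  generalize DD (0,1,0) (fun q => DD (1,0,0) g q * ((k q)⁻¹ * E q)⁻¹) p = W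
  have : (c^2+s^2) • (X + Y) = X + Y := by rw [hcs, one_smul]
  rw [← this]
  module
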